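/- Let Ω = (−h₁/2, h₁/2)×(−h₂/2, h₂/2)×(−h₃/2, h₃/2) with h₁,h₂,h₃ > 0 and Γ = ∂Ω (the whole boundary of the parallelepiped). Then the sharp constant C₁(Ω,Γ) in the inequality ‖w‖_{L²(Ω)} ≤ C₁‖∇w‖_{L²(Ω)} for all w ∈ H̃¹(Ω,Γ) is equal to (1/π)·max{h₁, h₂, h₃}. -/

import Mathlib

open MeasureTheory Real

lemma cot_cont {v v' : ℝ → ℝ} (hv : ∀ t, HasDerivAt v (v' t) t) (k t₀ p : ℝ) (hk : k ≠ 0)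
    (hp : sin (k * (p - t₀)) ≠ 0 ∨ v p = 0) :
    ContinuousAt (fun t => k * cos (k * (t - t₀)) * (v t ^ 2 / sin (k * (t - t₀)))) p := by
  have hvc : ContinuousAt v p := (hv p).continuousAt
  by_cases hs : sin (k * (p - t₀)) = 0
  · have hvp : v p = 0 := by
      rcases hp with h | h
      · exact absurd hs h
      · exact h
    have hcos : cos (k * (p - t₀)) ≠ 0 := by
      intro hc
      have := sin_sq_add_cos_sq (k * (p - t₀))
      rw [hs, hc] at this
      norm_num at this
    refine ContinuousAt.mul (by fun_prop) ?_
    have hd : HasDerivAt (fun t => sin (k * (t - t₀))) (cos (k * (p - t₀)) * (k * 1)) p :=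
      (((hasDerivAt_id p).sub_const t₀).const_mul k).sin
    have h1 := (hv p).isBigO_sub
    have h2 := (HasDerivAtFilter.isTheta_sub hd
      (by simpa using ⟨hcos, hk⟩)).isBigO_symm
    have h3 : v =O[nhds p] (fun t => sin (k * (t - t₀))) := by
      have h2' : (fun t => t - p) =O[nhds p] (fun t => sin (k * (t - t₀))) := by
        have h5 := h2.comp_tendsto (show Filter.Tendsto (fun t => (t, p)) (nhds p)
          (nhds p ×ˢ pure p) from Filter.Tendsto.prodMk Filter.tendsto_id
            (Filter.tendsto_pure.2 (Filter.Eventually.of_forall fun _ => rfl)))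
        simpa [Function.comp_def, hs] using h5
      have h1' : v =O[nhds p] (fun t => t - p) := by simpa [hvp] using h1
      exact h1'.trans h2'
    obtain ⟨c, hc⟩ := h3.bound
    unfold ContinuousAt
    simp only [hvp, hs, div_zero]
    have h6 : Filter.Tendsto (fun t => c * |v t|) (nhds p) (nhds 0) := by
      have : Filter.Tendsto (fun t => c * |v t|) (nhds p) (nhds (c * |v p|)) :=
        (continuousAt_const.mul hvc.abs)
      simpa [hvp] using this
    refine squeeze_zero_norm' ?_ h6
    filter_upwards [hc] with t ht
    simp only [Real.norm_eq_abs] at ht ⊢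
    by_cases hst : sin (k * (t - t₀)) = 0
    · rw [hst] at ht ⊢
      have : |v t| = 0 := le_antisymm (by simpa using ht) (abs_nonneg _)
      simp [this]
    · rw [abs_div, div_le_iff₀ (abs_pos.2 hst), abs_pow]
      nlinarith [abs_nonneg (v t)]
  · have : ContinuousAt (fun t => sin (k * (t - t₀))) p := by fun_prop
    exact ContinuousAt.mul (by fun_prop) ((hvc.pow 2).div this hs)

lemma cot_piece {v v' : ℝ → ℝ} (hv : ∀ t, HasDerivAt v (v' t) t) (hv' : Continuous v')
    (k t₀ a b : ℝ) (hab : a ≤ b) (hk : k ≠ 0)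
    (hz : ∀ p ∈ Set.Icc a b, sin (k * (p - t₀)) ≠ 0 ∨ v p = 0)
    (hs : ∀ p ∈ Set.Ioo a b, sin (k * (p - t₀)) ≠ 0) :
    k * cos (k * (b - t₀)) * (v b ^ 2 / sin (k * (b - t₀)))
      - k * cos (k * (a - t₀)) * (v a ^ 2 / sin (k * (a - t₀)))
      ≤ ∫ t in a..b, (v' t ^ 2 - k ^ 2 * v t ^ 2) := by
  have hvc : Continuous v := continuous_iff_continuousAt.2 fun t => (hv t).continuousAt
  refine intervalIntegral.sub_le_integral_of_hasDeriv_right_of_le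
    (g := fun t => k * cos (k * (t - t₀)) * (v t ^ 2 / sin (k * (t - t₀)))) hab
    (fun p hp => (cot_cont hv k t₀ p hk (hz p hp)).continuousWithinAt) (fun p hp => ?_)
    (by fun_prop : Continuous fun t => (v' t ^ 2 - k ^ 2 * v t ^ 2)).continuousOn.integrableOn_Icc
    (g' := fun p => k * (-sin (k * (p - t₀)) * (k * 1)) * (v p ^ 2 / sin (k * (p - t₀)))
      + k * cos (k * (p - t₀)) * (((2 : ℕ) * v p ^ (2 - 1) * v' p * sin (k * (p - t₀))
        - v p ^ 2 * (cos (k * (p - t₀)) * (k * 1))) / sin (k * (p - t₀)) ^ 2))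
    (fun p hp => ?_)
  · have hl := ((hasDerivAt_id p).sub_const t₀).const_mul k
    exact ((hl.cos.const_mul k).mul (((hv p).pow 2).div hl.sin (hs p hp))).hasDerivWithinAt
  · have h0 := hs p hp
    have hsc := sin_sq_add_cos_sq (k * (p - t₀))
    set s := sin (k * (p - t₀))
    set c := cos (k * (p - t₀))
    have hkey : v' p ^ 2 - k ^ 2 * v p ^ 2 - (k * (-s * (k * 1)) * (v p ^ 2 / s)
      + k * c * (((2 : ℕ) * v p ^ (2 - 1) * v' p * s - v p ^ 2 * (c * (k * 1))) / s ^ 2))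
      = (v' p - k * c / s * v p) ^ 2 := by
      field_simp
      norm_num
      ring
    nlinarith [sq_nonneg (v' p - k * c / s * v p)]

lemma wirtinger_anti {v v' : ℝ → ℝ} (hv : ∀ t, HasDerivAt v (v' t) t) (hv' : Continuous v')
    (a h : ℝ) (hh : 0 < h) (hanti : v (a + h) = - v a) :
    0 ≤ ∫ t in a..(a + h), (v' t ^ 2 - (π / h) ^ 2 * v t ^ 2) := by
  have hvc : Continuous v := continuous_iff_continuousAt.2 fun t => (hv t).continuousAt
  have hab : a ≤ a + h := by linarith
  obtain ⟨t₀, ht₀, hz⟩ : ∃ t ∈ Set.Icc a (a + h), v t = 0 := by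
    have h1 := intermediate_value_uIcc (a := a) (b := a + h) hvc.continuousOn
    rw [Set.uIcc_of_le hab] at h1
    have : (0 : ℝ) ∈ Set.uIcc (v a) (v (a + h)) := by
      rw [hanti, Set.mem_uIcc]
      rcases le_total 0 (v a) with h | h
      · right; constructor <;> linarith
      · left; constructor <;> linarith
    exact h1 this
  set k := π / h with hkdef
  have hkh : k * h = π := by rw [hkdef]; field_simp
  have hk : 0 < k := by positivity
  have hsin : ∀ p, p - t₀ ≠ 0 → |p - t₀| < h → sin (k * (p - t₀)) ≠ 0 := by
    intro p h1 h2
    rw [abs_lt] at h2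
    have h3 : k * (p - t₀) < π := by rw [← hkh]; exact mul_lt_mul_of_pos_left h2.2 hk
    have h4 : -π < k * (p - t₀) := by rw [← hkh]; nlinarith
    intro h5
    rw [sin_eq_zero_iff_of_lt_of_lt h4 h3] at h5
    rcases mul_eq_zero.1 h5 with h6 | h6
    · exact hk.ne' h6
    · exact h1 h6
  have hor : ∀ p ∈ Set.Icc a (a + h), sin (k * (p - t₀)) ≠ 0 ∨ v p = 0 := by
    intro p hp
    by_cases h1 : p = t₀
    · right; rw [h1, hz]
    by_cases h2 : |p - t₀| < h
    · left; exact hsin p (sub_ne_zero.2 h1) h2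
    · right
      rw [abs_lt, not_and_or] at h2
      rcases h2 with h2 | h2
      · have e1 : p = a := by linarith [hp.1, ht₀.2]
        have e2 : t₀ = a + h := by linarith [hp.1, ht₀.2]
        rw [e1]; rw [e2, hanti] at hz; linarith
      · have e1 : p = a + h := by linarith [hp.2, ht₀.1]
        have e2 : t₀ = a := by linarith [hp.2, ht₀.1]
        rw [e1, hanti]; rw [e2] at hz; linarith
  have i1 := cot_piece hv hv' k t₀ a t₀ ht₀.1 hk.ne'
    (fun p hp => hor p ⟨hp.1, hp.2.trans ht₀.2⟩)
    (fun p hp => hsin p (by have := hp.2; intro; linarith)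
      (by rw [abs_lt]; constructor <;> linarith [hp.1, hp.2, ht₀.1, ht₀.2]))
  have i2 := cot_piece hv hv' k t₀ t₀ (a + h) ht₀.2 hk.ne'
    (fun p hp => hor p ⟨ht₀.1.trans hp.1, hp.2⟩)
    (fun p hp => hsin p (by have := hp.1; intro; linarith)
      (by rw [abs_lt]; constructor <;> linarith [hp.1, hp.2, ht₀.1, ht₀.2]))
  have hc : Continuous fun t => (v' t ^ 2 - k ^ 2 * v t ^ 2) := by fun_prop
  rw [← intervalIntegral.integral_add_adjacent_intervals (hc.intervalIntegrable a t₀)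
    (hc.intervalIntegrable t₀ (a + h))]
  have e : k * (a + h - t₀) = k * (a - t₀) + π := by rw [← hkh]; ring
  rw [e, cos_add_pi, sin_add_pi, hanti] at i2
  have e3 : k * -cos (k * (a - t₀)) * ((-v a) ^ 2 / -sin (k * (a - t₀)))
    = k * cos (k * (a - t₀)) * (v a ^ 2 / sin (k * (a - t₀))) := by
    rw [div_neg]; ring
  rw [e3] at i2
  linarith

/-- average over the centred interval of length `h` -/
noncomputable def avg (h : ℝ) (f : ℝ → ℝ) : ℝ := h⁻¹ * ∫ t in (-(h/2))..(h/2), f t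

lemma avg_add {h : ℝ} {f g : ℝ → ℝ} (hf : Continuous f) (hg : Continuous g) :
    avg h (fun t => f t + g t) = avg h f + avg h g := by
  unfold avg
  rw [intervalIntegral.integral_add (hf.intervalIntegrable _ _) (hg.intervalIntegrable _ _)]; ring

lemma avg_sub {h : ℝ} {f g : ℝ → ℝ} (hf : Continuous f) (hg : Continuous g) :
    avg h (fun t => f t - g t) = avg h f - avg h g := by
  unfold avg
  rw [intervalIntegral.integral_sub (hf.intervalIntegrable _ _) (hg.intervalIntegrable _ _)]; ring

lemma avg_mul {h : ℝ} (c : ℝ) (f : ℝ → ℝ) :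
    avg h (fun t => c * f t) = c * avg h f := by
  unfold avg
  rw [intervalIntegral.integral_const_mul]; ring

lemma avg_const {h : ℝ} (hh : 0 < h) (c : ℝ) : avg h (fun _ => c) = c := by
  unfold avg
  rw [intervalIntegral.integral_const, smul_eq_mul]
  field_simp
  ring

lemma avg_mono {h : ℝ} (hh : 0 < h) {f g : ℝ → ℝ} (hf : Continuous f) (hg : Continuous g)
    (hfg : ∀ t, f t ≤ g t) : avg h f ≤ avg h g := by
  unfold avg
  exact mul_le_mul_of_nonneg_left (intervalIntegral.integral_mono (by linarith)
    (hf.intervalIntegrable _ _) (hg.intervalIntegrable _ _) hfg) (by positivity)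

@[fun_prop]
lemma avg_cont {X : Type*} [TopologicalSpace X] {h : ℝ} {f : X → ℝ → ℝ}
    (hf : Continuous (fun p : X × ℝ => f p.1 p.2)) : Continuous fun x => avg h (f x) := by
  unfold avg
  exact continuous_const.mul
    (intervalIntegral.continuous_parametric_intervalIntegral_of_continuous' hf _ _)

lemma avg_swap {h k : ℝ} {f : ℝ → ℝ → ℝ} (hf : Continuous (fun p : ℝ × ℝ => f p.1 p.2)) :
    avg h (fun x => avg k (fun y => f x y)) = avg k (fun y => avg h (fun x => f x y)) := by
  unfold avg
  rw [intervalIntegral.integral_const_mul, intervalIntegral.integral_const_mul,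
    intervalIntegral_intervalIntegral_swap]
  · ring
  · exact (hf.continuousOn.integrableOn_compact (isCompact_uIcc.prod isCompact_uIcc)).mono_set
      (Set.prod_mono Set.uIoc_subset_uIcc Set.uIoc_subset_uIcc)

lemma avg_var {h : ℝ} (hh : 0 < h) {f : ℝ → ℝ} (hf : Continuous f) (c : ℝ) :
    avg h (fun t => (f t - c) ^ 2) = avg h (fun t => f t ^ 2) - 2 * c * avg h f + c ^ 2 := by
  have : (fun t => (f t - c) ^ 2) = fun t => (f t ^ 2 - 2 * c * f t) + c ^ 2 := by
    funext t; ring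
  rw [this, avg_add (by fun_prop) (by fun_prop), avg_sub (by fun_prop) (by fun_prop), avg_mul,
    avg_const hh]

lemma avg_sq_le {h : ℝ} (hh : 0 < h) {f : ℝ → ℝ} (hf : Continuous f) :
    avg h f ^ 2 ≤ avg h (fun t => f t ^ 2) := by
  have h1 := avg_var hh hf (avg h f)
  have h2 := avg_mono hh (f := fun _ => 0) (g := fun t => (f t - avg h f) ^ 2) (by fun_prop)
    (by fun_prop) (fun t => sq_nonneg _)
  rw [avg_const hh] at h2
  nlinarith

lemma avg_wirtinger {h : ℝ} (hh : 0 < h) {u u' : ℝ → ℝ} (hu : ∀ t, HasDerivAt u (u' t) t)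
    (hu' : Continuous u') :
    avg h (fun t => u t ^ 2) - avg h u ^ 2 + (avg h u - (u (-(h/2)) + u (h/2)) / 2) ^ 2
      ≤ (h / π) ^ 2 * avg h (fun t => u' t ^ 2) := by
  have huc : Continuous u := continuous_iff_continuousAt.2 fun t => (hu t).continuousAt
  set e := (u (-(h/2)) + u (h/2)) / 2 with he
  have h1 := wirtinger_anti (v := fun t => u t - e) (fun t => (hu t).sub_const e) hu' (-(h/2)) h hh
    (by rw [show -(h/2) + h = h/2 by ring, he]; ring)
  rw [show -(h/2) + h = h/2 by ring] at h1
  have h2 : 0 ≤ avg h (fun t => u' t ^ 2 - (π / h) ^ 2 * (u t - e) ^ 2) := by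
    unfold avg; positivity
  rw [avg_sub (by fun_prop) (by fun_prop), avg_mul, avg_var hh huc] at h2
  have h3 : (h / π) ^ 2 * (π / h) ^ 2 = 1 := by
    have := pi_pos; field_simp
  have h4 := mul_nonneg (sq_nonneg (h / π)) h2
  rw [mul_sub, ← mul_assoc, h3] at h4
  nlinarith

lemma sub2 {h k : ℝ} (hh : 0 < h) (hk : 0 < k) {f : ℝ × ℝ → ℝ} (hf : Continuous f) :
    avg k (fun y => avg h (fun x => f (x, y)) ^ 2) + avg h (fun x => avg k (fun y => f (x, y)) ^ 2)
      ≤ avg h (fun x => avg k (fun y => f (x, y) ^ 2))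
        + avg h (fun x => avg k (fun y => f (x, y))) ^ 2 := by
  set M := avg h (fun x => avg k (fun y => f (x, y))) with hM
  have hMg : avg k (fun y => avg h (fun x => f (x, y))) = M := by
    rw [hM]; exact (avg_swap (f := fun x y => f (x, y)) (by fun_prop)).symm
  have h1 : ∀ y, (avg h (fun x => f (x, y)) - M) ^ 2
      ≤ avg h (fun x => (f (x, y) - avg k (fun y => f (x, y))) ^ 2) := by
    intro y
    rw [hM, ← avg_sub (by fun_prop) (by fun_prop)]
    exact avg_sq_le hh (by fun_prop)
  have h2 := avg_mono hk (by fun_prop) (by fun_prop) h1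
  rw [avg_var hk (by fun_prop), hMg,
    avg_swap (f := fun y x => (f (x, y) - avg k (fun y => f (x, y))) ^ 2) (by fun_prop)] at h2
  have h3 : (fun x => avg k (fun y => (f (x, y) - avg k (fun y => f (x, y))) ^ 2))
      = fun x => avg k (fun y => f (x, y) ^ 2) - avg k (fun y => f (x, y)) ^ 2 := by
    funext x
    rw [avg_var hk (by fun_prop)]; ring
  rw [h3, avg_sub (by fun_prop) (by fun_prop)] at h2
  nlinarith

lemma efron {h₁ h₂ h₃ : ℝ} (hh₁ : 0 < h₁) (hh₂ : 0 < h₂) (hh₃ : 0 < h₃) {f : ℝ × ℝ × ℝ → ℝ}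
    (hf : Continuous f) :
    avg h₃ (fun z => avg h₂ (fun y => avg h₁ (fun x => f (x, y, z)) ^ 2))
    + avg h₃ (fun z => avg h₁ (fun x => avg h₂ (fun y => f (x, y, z)) ^ 2))
    + avg h₁ (fun x => avg h₂ (fun y => avg h₃ (fun z => f (x, y, z)) ^ 2))
    ≤ 2 * avg h₁ (fun x => avg h₂ (fun y => avg h₃ (fun z => f (x, y, z) ^ 2)))
      + avg h₁ (fun x => avg h₂ (fun y => avg h₃ (fun z => f (x, y, z)))) ^ 2 := by
  have s1 := avg_mono hh₃ (by fun_prop) (by fun_prop)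
    (fun z => sub2 hh₁ hh₂ (f := fun p => f (p.1, p.2, z)) (by fun_prop))
  have s2 := avg_mono hh₁ (by fun_prop) (by fun_prop)
    (fun x => sub2 hh₂ hh₃ (f := fun p => f (x, p.1, p.2)) (by fun_prop))
  have s3 := sub2 hh₁ hh₃ (f := fun p => avg h₂ (fun y => f (p.1, y, p.2))) (by fun_prop)
  simp only at s1 s2 s3
  rw [avg_add (by fun_prop) (by fun_prop), avg_add (by fun_prop) (by fun_prop)] at s1 s2
  have e1 : avg h₃ (fun z => avg h₁ (fun x => avg h₂ (fun y => f (x, y, z) ^ 2)))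
    = avg h₁ (fun x => avg h₂ (fun y => avg h₃ (fun z => f (x, y, z) ^ 2))) := by
    rw [avg_swap (f := fun z x => avg h₂ (fun y => f (x, y, z) ^ 2)) (by fun_prop)]
    congr 1; funext x
    exact avg_swap (f := fun z y => f (x, y, z) ^ 2) (by fun_prop)
  have e2 : (fun x => avg h₃ (fun z => avg h₂ (fun y => f (x, y, z))))
    = fun x => avg h₂ (fun y => avg h₃ (fun z => f (x, y, z))) := by
    funext x
    exact avg_swap (f := fun z y => f (x, y, z)) (by fun_prop)
  have e2' : ∀ x, avg h₃ (fun z => avg h₂ (fun y => f (x, y, z)))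
    = avg h₂ (fun y => avg h₃ (fun z => f (x, y, z))) := fun x => congrFun e2 x
  have e3 : avg h₃ (fun z => avg h₁ (fun x => avg h₂ (fun y => f (x, y, z)) ^ 2))
    = avg h₁ (fun x => avg h₃ (fun z => avg h₂ (fun y => f (x, y, z)) ^ 2)) :=
    avg_swap (f := fun z x => avg h₂ (fun y => f (x, y, z)) ^ 2) (by fun_prop)
  simp only [e2'] at s3
  linarith

lemma face_bound {h₁ h₂ h₃ : ℝ} (hh₁ : 0 < h₁) (hh₂ : 0 < h₂) (hh₃ : 0 < h₃)
    {f g : ℝ × ℝ × ℝ → ℝ} (hf : Continuous f) (hg : Continuous g)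
    (hd : ∀ x y z, HasDerivAt (fun t => f (t, y, z)) (g (x, y, z)) x) :
    avg h₃ (fun z => avg h₂ (fun y => avg h₁ (fun x => f (x, y, z) ^ 2)))
    - avg h₃ (fun z => avg h₂ (fun y => avg h₁ (fun x => f (x, y, z)) ^ 2))
    + (avg h₃ (fun z => avg h₂ (fun y => avg h₁ (fun x => f (x, y, z))))
      - avg h₃ (fun z => avg h₂ (fun y => f (-(h₁/2), y, z) + f (h₁/2, y, z))) / 2) ^ 2
    ≤ (h₁ / π) ^ 2 * avg h₃ (fun z => avg h₂ (fun y => avg h₁ (fun x => g (x, y, z) ^ 2))) := by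
  have s1 := avg_mono hh₃ (by fun_prop) (by fun_prop) fun z =>
    avg_mono hh₂ (by fun_prop) (by fun_prop) fun y =>
      avg_wirtinger hh₁ (u := fun t => f (t, y, z)) (u' := fun t => g (t, y, z))
        (fun x => hd x y z) (by fun_prop)
  simp only [avg_mul] at s1
  have e : ∀ z, avg h₂ (fun y => avg h₁ (fun x => f (x, y, z) ^ 2) - avg h₁ (fun x => f (x, y, z)) ^ 2
      + (avg h₁ (fun x => f (x, y, z)) - (f (-(h₁/2), y, z) + f (h₁/2, y, z)) / 2) ^ 2)
      = avg h₂ (fun y => avg h₁ (fun x => f (x, y, z) ^ 2))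
       - avg h₂ (fun y => avg h₁ (fun x => f (x, y, z)) ^ 2)
      + avg h₂ (fun y => (avg h₁ (fun x => f (x, y, z)) - (f (-(h₁/2), y, z) + f (h₁/2, y, z)) / 2) ^ 2) := by
    intro z
    rw [avg_add (by fun_prop) (by fun_prop), avg_sub (by fun_prop) (by fun_prop)]
  simp only [e] at s1
  rw [avg_add (by fun_prop) (by fun_prop), avg_sub (by fun_prop) (by fun_prop)] at s1
  have j1 := avg_mono hh₃ (by fun_prop) (by fun_prop) fun z => avg_sq_le hh₂
    (f := fun y => avg h₁ (fun x => f (x, y, z)) - (f (-(h₁/2), y, z) + f (h₁/2, y, z)) / 2)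
    (by fun_prop)
  have j2 := avg_sq_le hh₃ (f := fun z => avg h₂ (fun y => avg h₁ (fun x => f (x, y, z))
    - (f (-(h₁/2), y, z) + f (h₁/2, y, z)) / 2)) (by fun_prop)
  have e4 : avg h₃ (fun z => avg h₂ (fun y => avg h₁ (fun x => f (x, y, z))
    - (f (-(h₁/2), y, z) + f (h₁/2, y, z)) / 2))
    = avg h₃ (fun z => avg h₂ (fun y => avg h₁ (fun x => f (x, y, z))))
      - avg h₃ (fun z => avg h₂ (fun y => f (-(h₁/2), y, z) + f (h₁/2, y, z))) / 2 := by
    have e5 : ∀ z, avg h₂ (fun y => avg h₁ (fun x => f (x, y, z))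
      - (f (-(h₁/2), y, z) + f (h₁/2, y, z)) / 2) = avg h₂ (fun y => avg h₁ (fun x => f (x, y, z)))
        - 2⁻¹ * avg h₂ (fun y => f (-(h₁/2), y, z) + f (h₁/2, y, z)) := by
      intro z
      rw [avg_sub (by fun_prop) (by fun_prop), ← avg_mul]
      congr 2; funext y; ring
    simp only [e5]
    rw [avg_sub (by fun_prop) (by fun_prop), avg_mul]; ring
  rw [e4] at j2
  linarith

/-- triple average -/
noncomputable def avg3 (h₁ h₂ h₃ : ℝ) (f : ℝ × ℝ × ℝ → ℝ) : ℝ :=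
  avg h₁ (fun x => avg h₂ (fun y => avg h₃ (fun z => f (x, y, z))))

lemma avg3_perm {h₁ h₂ h₃ : ℝ} {f : ℝ × ℝ × ℝ → ℝ} (hf : Continuous f) :
    avg h₃ (fun z => avg h₁ (fun x => avg h₂ (fun y => f (x, y, z)))) = avg3 h₁ h₂ h₃ f := by
  unfold avg3
  rw [avg_swap (f := fun z x => avg h₂ (fun y => f (x, y, z))) (by fun_prop)]
  congr 1; funext x
  exact avg_swap (f := fun z y => f (x, y, z)) (by fun_prop)

lemma avg3_perm' {h₁ h₂ h₃ : ℝ} {f : ℝ × ℝ × ℝ → ℝ} (hf : Continuous f) :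
    avg h₃ (fun z => avg h₂ (fun y => avg h₁ (fun x => f (x, y, z)))) = avg3 h₁ h₂ h₃ f := by
  rw [← avg3_perm hf]
  congr 1; funext z
  exact avg_swap (f := fun y x => f (x, y, z)) (by fun_prop)

lemma avg3_add {h₁ h₂ h₃ : ℝ} {f g : ℝ × ℝ × ℝ → ℝ} (hf : Continuous f) (hg : Continuous g) :
    avg3 h₁ h₂ h₃ (fun p => f p + g p) = avg3 h₁ h₂ h₃ f + avg3 h₁ h₂ h₃ g := by
  unfold avg3
  rw [← avg_add (by fun_prop) (by fun_prop)]
  congr 1; funext x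
  rw [← avg_add (by fun_prop) (by fun_prop)]
  congr 1; funext y
  rw [← avg_add (by fun_prop) (by fun_prop)]

lemma avg3_nonneg {h₁ h₂ h₃ : ℝ} (hh₁ : 0 < h₁) (hh₂ : 0 < h₂) (hh₃ : 0 < h₃)
    {f : ℝ × ℝ × ℝ → ℝ} (hf : Continuous f) (h0 : ∀ p, 0 ≤ f p) : 0 ≤ avg3 h₁ h₂ h₃ f := by
  have := avg_mono hh₁ (by fun_prop) (by fun_prop) fun x => avg_mono hh₂ (by fun_prop)
    (by fun_prop) fun y => avg_mono hh₃ (f := fun _ => 0) (g := fun z => f (x, y, z)) (by fun_prop)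
      (by fun_prop) fun z => h0 (x, y, z)
  unfold avg3
  simpa only [avg_const hh₁, avg_const hh₂, avg_const hh₃] using this

lemma weights {s₁ s₂ s₃ m b₁ b₂ b₃ : ℝ} (h₁ : 0 < s₁) (h₂ : 0 < s₂) (h₃ : 0 < s₃)
    (hb : s₁ * b₁ + s₂ * b₂ + s₃ * b₃ = 0) :
    m ^ 2 ≤ (m - b₁) ^ 2 + (m - b₂) ^ 2 + (m - b₃) ^ 2 := by
  set x := m - b₁
  set y := m - b₂
  set z := m - b₃
  have hS : (s₁ + s₂ + s₃) * m = s₁ * x + s₂ * y + s₃ * z := by simp only [x, y, z]; linarith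
  have h4 : (s₁ * x + s₂ * y + s₃ * z) ^ 2 ≤ (s₁ + s₂ + s₃) ^ 2 * (x ^ 2 + y ^ 2 + z ^ 2) := by
    nlinarith [mul_nonneg (mul_pos h₁ h₂).le (sq_nonneg (x - y)),
      mul_nonneg (mul_pos h₁ h₃).le (sq_nonneg (x - z)),
      mul_nonneg (mul_pos h₂ h₃).le (sq_nonneg (y - z)),
      mul_nonneg (sq_nonneg s₁) (add_nonneg (sq_nonneg y) (sq_nonneg z)),
      mul_nonneg (sq_nonneg s₂) (add_nonneg (sq_nonneg x) (sq_nonneg z)),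
      mul_nonneg (sq_nonneg s₃) (add_nonneg (sq_nonneg x) (sq_nonneg y)),
      mul_nonneg (mul_pos h₁ h₂).le (sq_nonneg x), mul_nonneg (mul_pos h₁ h₂).le (sq_nonneg y),
      mul_nonneg (mul_pos h₁ h₂).le (sq_nonneg z), mul_nonneg (mul_pos h₁ h₃).le (sq_nonneg x),
      mul_nonneg (mul_pos h₁ h₃).le (sq_nonneg y), mul_nonneg (mul_pos h₁ h₃).le (sq_nonneg z),
      mul_nonneg (mul_pos h₂ h₃).le (sq_nonneg x), mul_nonneg (mul_pos h₂ h₃).le (sq_nonneg y),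
      mul_nonneg (mul_pos h₂ h₃).le (sq_nonneg z)]
  rw [← hS, mul_pow] at h4
  exact le_of_mul_le_mul_left h4 (by positivity)

lemma main_avg {h₁ h₂ h₃ H : ℝ} (hh₁ : 0 < h₁) (hh₂ : 0 < h₂) (hh₃ : 0 < h₃)
    (H₁ : h₁ ≤ H) (H₂ : h₂ ≤ H) (H₃ : h₃ ≤ H)
    {f g₁ g₂ g₃ : ℝ × ℝ × ℝ → ℝ} (hf : Continuous f) (hg₁ : Continuous g₁) (hg₂ : Continuous g₂)
    (hg₃ : Continuous g₃)
    (hd₁ : ∀ x y z, HasDerivAt (fun t => f (t, y, z)) (g₁ (x, y, z)) x)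
    (hd₂ : ∀ x y z, HasDerivAt (fun t => f (x, t, z)) (g₂ (x, y, z)) y)
    (hd₃ : ∀ x y z, HasDerivAt (fun t => f (x, y, t)) (g₃ (x, y, z)) z)
    (hb : h₂ * h₃ * avg h₂ (fun y => avg h₃ (fun z => f (-(h₁/2), y, z) + f (h₁/2, y, z)))
      + h₁ * h₃ * avg h₁ (fun x => avg h₃ (fun z => f (x, -(h₂/2), z) + f (x, h₂/2, z)))
      + h₁ * h₂ * avg h₁ (fun x => avg h₂ (fun y => f (x, y, -(h₃/2)) + f (x, y, h₃/2))) = 0) :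
    avg3 h₁ h₂ h₃ (fun p => f p ^ 2)
      ≤ (H / π) ^ 2 * avg3 h₁ h₂ h₃ (fun p => g₁ p ^ 2 + g₂ p ^ 2 + g₃ p ^ 2) := by
  have b1 := face_bound hh₁ hh₂ hh₃ hf hg₁ hd₁
  have b2 := face_bound hh₂ hh₁ hh₃ (f := fun p => f (p.2.1, p.1, p.2.2))
    (g := fun p => g₂ (p.2.1, p.1, p.2.2)) (by fun_prop) (by fun_prop) (fun y x z => hd₂ x y z)
  have b3 := face_bound hh₃ hh₂ hh₁ (f := fun p => f (p.2.2, p.2.1, p.1))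
    (g := fun p => g₃ (p.2.2, p.2.1, p.1)) (by fun_prop) (by fun_prop) (fun z y x => hd₃ x y z)
  have ef := efron hh₁ hh₂ hh₃ hf
  simp only at b2 b3
  rw [avg3_perm' (f := fun p => f p ^ 2) (by fun_prop), avg3_perm' hf,
    avg3_perm' (f := fun p => g₁ p ^ 2) (by fun_prop)] at b1
  rw [avg3_perm (f := fun p => f p ^ 2) (by fun_prop), avg3_perm hf,
    avg3_perm (f := fun p => g₂ p ^ 2) (by fun_prop)] at b2
  rw [avg_swap (h := h₂) (f := fun y z => f (-(h₁/2), y, z) + f (h₁/2, y, z)) (by fun_prop),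
    avg_swap (h := h₁) (k := h₃) (f := fun x z => f (x, -(h₂/2), z) + f (x, h₂/2, z))
      (by fun_prop)] at hb
  rw [avg3_add (by fun_prop) (by fun_prop), avg3_add (by fun_prop) (by fun_prop)]
  change avg3 h₁ h₂ h₃ (fun p => f p ^ 2) - _ + (avg3 h₁ h₂ h₃ f - _) ^ 2
    ≤ _ * avg3 h₁ h₂ h₃ (fun p => g₃ p ^ 2) at b3
  change _ ≤ 2 * avg3 h₁ h₂ h₃ (fun p => f p ^ 2) + (avg3 h₁ h₂ h₃ f) ^ 2 at ef
  have n1 := avg3_nonneg hh₁ hh₂ hh₃ (f := fun p => g₁ p ^ 2) (by fun_prop) (fun p => sq_nonneg _)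
  have n2 := avg3_nonneg hh₁ hh₂ hh₃ (f := fun p => g₂ p ^ 2) (by fun_prop) (fun p => sq_nonneg _)
  have n3 := avg3_nonneg hh₁ hh₂ hh₃ (f := fun p => g₃ p ^ 2) (by fun_prop) (fun p => sq_nonneg _)
  have q : ∀ h : ℝ, 0 < h → h ≤ H → (h / π) ^ 2 ≤ (H / π) ^ 2 := by
    intro h h0 hH
    have := pi_pos
    gcongr
  have w1 := mul_le_mul_of_nonneg_right (q h₁ hh₁ H₁) n1
  have w2 := mul_le_mul_of_nonneg_right (q h₂ hh₂ H₂) n2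
  have w3 := mul_le_mul_of_nonneg_right (q h₃ hh₃ H₃) n3
  have ww := weights (m := avg3 h₁ h₂ h₃ f)
    (b₁ := avg h₃ (fun z => avg h₂ (fun y => f (-(h₁/2), y, z) + f (h₁/2, y, z))) / 2)
    (b₂ := avg h₃ (fun z => avg h₁ (fun x => f (x, -(h₂/2), z) + f (x, h₂/2, z))) / 2)
    (b₃ := avg h₁ (fun x => avg h₂ (fun y => f (x, y, -(h₃/2)) + f (x, y, h₃/2))) / 2)
    (mul_pos hh₂ hh₃) (mul_pos hh₁ hh₃) (mul_pos hh₁ hh₂) (by linarith)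
  linarith

lemma int_Ioo {h : ℝ} (hh : 0 < h) (f : ℝ → ℝ) :
    ∫ x in Set.Ioo (-(h/2)) (h/2), f x = h * avg h f := by
  unfold avg
  rw [← integral_Ioc_eq_integral_Ioo, ← intervalIntegral.integral_of_le (by linarith)]
  field_simp

lemma int_face {h k : ℝ} (hh : 0 < h) (hk : 0 < k) {f : ℝ × ℝ → ℝ} (hf : Continuous f) :
    ∫ p in Set.Ioo (-(h/2)) (h/2) ×ˢ Set.Ioo (-(k/2)) (k/2), f p
      = h * k * avg h (fun x => avg k (fun y => f (x, y))) := by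
  rw [Measure.volume_eq_prod, setIntegral_prod]
  · rw [int_Ioo hh]
    simp only [int_Ioo hk, avg_mul]
    ring
  · exact (hf.continuousOn.integrableOn_compact (isCompact_Icc.prod isCompact_Icc)).mono_set
      (Set.prod_mono Set.Ioo_subset_Icc_self Set.Ioo_subset_Icc_self)

lemma int_box' {h₁ h₂ h₃ : ℝ} (hh₁ : 0 < h₁) (hh₂ : 0 < h₂) (hh₃ : 0 < h₃)
    {f : ℝ × ℝ × ℝ → ℝ} (hf : Continuous f) :
    ∫ p in Set.Ioo (-(h₁/2)) (h₁/2) ×ˢ (Set.Ioo (-(h₂/2)) (h₂/2) ×ˢ Set.Ioo (-(h₃/2)) (h₃/2)), f p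
      = h₁ * h₂ * h₃ * avg3 h₁ h₂ h₃ f := by
  rw [Measure.volume_eq_prod, setIntegral_prod]
  · rw [int_Ioo hh₁]
    have : ∀ x, ∫ p in Set.Ioo (-(h₂/2)) (h₂/2) ×ˢ Set.Ioo (-(h₃/2)) (h₃/2), f (x, p)
      = h₂ * h₃ * avg h₂ (fun y => avg h₃ (fun z => f (x, y, z))) :=
      fun x => int_face hh₂ hh₃ (f := fun p => f (x, p)) (by fun_prop)
    simp only [this, avg_mul, avg3]
    ring
  · exact (hf.continuousOn.integrableOn_compact (isCompact_Icc.prod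
      (isCompact_Icc.prod isCompact_Icc))).mono_set
      (Set.prod_mono Set.Ioo_subset_Icc_self
        (Set.prod_mono Set.Ioo_subset_Icc_self Set.Ioo_subset_Icc_self))

/-- the coordinates as a measurable equivalence -/
noncomputable def coordEquiv : EuclideanSpace ℝ (Fin 3) ≃ᵐ ℝ × ℝ × ℝ :=
  ((MeasurableEquiv.toLp 2 (Fin 3 → ℝ)).symm.trans
    (MeasurableEquiv.piFinSuccAbove (fun _ : Fin 3 => ℝ) 0)).trans
    (MeasurableEquiv.prodCongr (MeasurableEquiv.refl ℝ) MeasurableEquiv.finTwoArrow)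

lemma coordEquiv_apply (x : EuclideanSpace ℝ (Fin 3)) : coordEquiv x = (x 0, x 1, x 2) := by
  rfl

lemma coordEquiv_mp : MeasurePreserving coordEquiv volume volume := by
  have h1 := EuclideanSpace.volume_preserving_symm_measurableEquiv_toLp (Fin 3)
  have h2 := volume_preserving_piFinSuccAbove (fun _ : Fin 3 => ℝ) 0
  have h3 := (MeasurePreserving.id (volume : Measure ℝ)).prod (volume_preserving_finTwoArrow ℝ)
  exact h3.comp (h2.comp h1)

lemma int_box {h₁ h₂ h₃ : ℝ} (hh₁ : 0 < h₁) (hh₂ : 0 < h₂) (hh₃ : 0 < h₃)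
    {g : EuclideanSpace ℝ (Fin 3) → ℝ} (hg : Continuous g) :
    ∫ x in {x : EuclideanSpace ℝ (Fin 3) |
            x 0 ∈ Set.Ioo (-(h₁/2)) (h₁/2) ∧ x 1 ∈ Set.Ioo (-(h₂/2)) (h₂/2) ∧
              x 2 ∈ Set.Ioo (-(h₃/2)) (h₃/2)}, g x
      = h₁ * h₂ * h₃ * avg3 h₁ h₂ h₃ (fun p => g !₂[p.1, p.2.1, p.2.2]) := by
  rw [← int_box' hh₁ hh₂ hh₃ (by fun_prop), ← coordEquiv_mp.setIntegral_preimage_emb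
    coordEquiv.measurableEmbedding]
  have : coordEquiv ⁻¹' (Set.Ioo (-(h₁/2)) (h₁/2) ×ˢ (Set.Ioo (-(h₂/2)) (h₂/2) ×ˢ Set.Ioo (-(h₃/2)) (h₃/2)))
    = {x : EuclideanSpace ℝ (Fin 3) |
            x 0 ∈ Set.Ioo (-(h₁/2)) (h₁/2) ∧ x 1 ∈ Set.Ioo (-(h₂/2)) (h₂/2) ∧
              x 2 ∈ Set.Ioo (-(h₃/2)) (h₃/2)} := by
    ext x; simp [coordEquiv_apply]
  rw [this]
  congr 1; funext x
  congr 1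
  rw [coordEquiv_apply]
  ext i; fin_cases i <;> rfl

lemma grad_sq (w : EuclideanSpace ℝ (Fin 3) → ℝ) (x : EuclideanSpace ℝ (Fin 3)) :
    ‖gradient w x‖ ^ 2 = fderiv ℝ w x (EuclideanSpace.single 0 1) ^ 2
      + fderiv ℝ w x (EuclideanSpace.single 1 1) ^ 2
      + fderiv ℝ w x (EuclideanSpace.single 2 1) ^ 2 := by
  rw [EuclideanSpace.real_norm_sq_eq, Fin.sum_univ_three]
  simp only [← inner_gradient_left, EuclideanSpace.inner_single_right]
  simp

lemma sin_sq_avg {h : ℝ} (hh : 0 < h) : avg h (fun t => sin (π / h * t) ^ 2) = 1 / 2 := by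
  unfold avg
  have := pi_pos
  rw [intervalIntegral.integral_comp_mul_left (fun t => sin t ^ 2) (by positivity), integral_sin_sq,
    show π / h * (h / 2) = π / 2 by field_simp, show π / h * -(h / 2) = -(π / 2) by field_simp]
  simp
  field_simp

lemma cos_sq_avg {h : ℝ} (hh : 0 < h) : avg h (fun t => cos (π / h * t) ^ 2) = 1 / 2 := by
  unfold avg
  have := pi_pos
  rw [intervalIntegral.integral_comp_mul_left (fun t => cos t ^ 2) (by positivity), integral_cos_sq,
    show π / h * (h / 2) = π / 2 by field_simp, show π / h * -(h / 2) = -(π / 2) by field_simp]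
  simp
  field_simp

lemma sin_avg {h : ℝ} (hh : 0 < h) : avg h (fun t => sin (π / h * t)) = 0 := by
  unfold avg
  have := pi_pos
  rw [intervalIntegral.integral_comp_mul_left (fun t => sin t) (by positivity), integral_sin,
    show π / h * (h / 2) = π / 2 by field_simp, show π / h * -(h / 2) = -(π / 2) by field_simp]
  simp

lemma sin_ends {h : ℝ} : sin (π / h * -(h/2)) + sin (π / h * (h/2)) = 0 := by
  rw [mul_neg, sin_neg]; ring

lemma test_fderiv (c : ℝ) (i : Fin 3) (x v : EuclideanSpace ℝ (Fin 3)) :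
    fderiv ℝ (fun x : EuclideanSpace ℝ (Fin 3) => sin (c * x i)) x v
      = cos (c * x i) * (c * v i) := by
  have h1 : HasFDerivAt (fun x : EuclideanSpace ℝ (Fin 3) => x i)
      (EuclideanSpace.proj (𝕜 := ℝ) i : EuclideanSpace ℝ (Fin 3) →L[ℝ] ℝ) x :=
    (EuclideanSpace.proj (𝕜 := ℝ) i : EuclideanSpace ℝ (Fin 3) →L[ℝ] ℝ).hasFDerivAt
  rw [((h1.const_mul c).sin).fderiv]
  simp

lemma test_grad (c : ℝ) (i : Fin 3) (x : EuclideanSpace ℝ (Fin 3)) :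
    ‖gradient (fun x : EuclideanSpace ℝ (Fin 3) => sin (c * x i)) x‖ ^ 2
      = c ^ 2 * cos (c * x i) ^ 2 := by
  rw [grad_sq]
  simp only [test_fderiv]
  fin_cases i <;> simp <;> ring

lemma final_ineq {V h C : ℝ} (hV : 0 < V) (hh : 0 < h)
    (hC : Real.sqrt (V * (1 / 2)) ≤ C * Real.sqrt (V * ((π / h) ^ 2 * (1 / 2)))) :
    π⁻¹ * h ≤ C := by
  have hp := pi_pos
  rw [show V * ((π / h) ^ 2 * (1 / 2)) = (π / h) ^ 2 * (V * (1 / 2)) by ring,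
    Real.sqrt_mul (sq_nonneg (π / h)), Real.sqrt_sq (by positivity)] at hC
  have hs : 0 < Real.sqrt (V * (1 / 2)) := Real.sqrt_pos.2 (by positivity)
  have h1 : 1 ≤ C * (π / h) := by
    by_contra hlt
    push Not at hlt
    nlinarith
  rw [inv_mul_le_iff₀ hp]
  have := mul_le_mul_of_nonneg_right h1 hh.le
  rw [mul_assoc, div_mul_cancel₀ _ hh.ne'] at this
  linarith

lemma deriv_line {w : EuclideanSpace ℝ (Fin 3) → ℝ} (hw : ContDiff ℝ 1 w) (i : Fin 3)
    (γ : ℝ → EuclideanSpace ℝ (Fin 3)) (t : ℝ)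
    (hγ : ∀ s, γ s = γ t + (s - t) • EuclideanSpace.single i (1 : ℝ)) :
    HasDerivAt (fun s => w (γ s)) (fderiv ℝ w (γ t) (EuclideanSpace.single i 1)) t := by
  have h1 : HasDerivAt γ (EuclideanSpace.single i (1 : ℝ)) t := by
    have h2 : HasDerivAt (fun s => γ t + (s - t) • EuclideanSpace.single i (1 : ℝ))
        ((1 : ℝ) • EuclideanSpace.single i (1 : ℝ)) t :=
      (((hasDerivAt_id t).sub_const t).smul_const _).const_add _
    rw [one_smul] at h2
    rw [show γ = (fun s => γ t + (s - t) • EuclideanSpace.single i (1 : ℝ)) from funext hγ]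
    convert h2 using 1
  exact ((hw.differentiable (by norm_num)) (γ t)).hasFDerivAt.comp_hasDerivAt t h1

/-- The sharp constant `C₁(Ω,Γ)` in `‖w‖_{L²(Ω)} ≤ C₁ ‖∇w‖_{L²(Ω)}` for functions
with zero mean trace on `Γ`, where `Ω = (−h₁/2,h₁/2) × (−h₂/2,h₂/2) × (−h₃/2,h₃/2)`
and `Γ = ∂Ω` is the whole boundary of the parallelepiped, equals
`(1/π) · max {h₁, h₂, h₃}`. The mean over `∂Ω` is written as the sum of the
integrals over the six faces. -/
theorem box_whole_boundary_C1 (h₁ h₂ h₃ : ℝ)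
    (hh₁ : 0 < h₁) (hh₂ : 0 < h₂) (hh₃ : 0 < h₃) :
    IsLeast {C : ℝ |
      ∀ w : EuclideanSpace ℝ (Fin 3) → ℝ, ContDiff ℝ 1 w →
        ((∫ p in Set.Ioo (-(h₂/2)) (h₂/2) ×ˢ Set.Ioo (-(h₃/2)) (h₃/2),
            (w !₂[-(h₁/2), p.1, p.2] + w !₂[h₁/2, p.1, p.2])) +
         (∫ p in Set.Ioo (-(h₁/2)) (h₁/2) ×ˢ Set.Ioo (-(h₃/2)) (h₃/2),
            (w !₂[p.1, -(h₂/2), p.2] + w !₂[p.1, h₂/2, p.2])) +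
         (∫ p in Set.Ioo (-(h₁/2)) (h₁/2) ×ˢ Set.Ioo (-(h₂/2)) (h₂/2),
            (w !₂[p.1, p.2, -(h₃/2)] + w !₂[p.1, p.2, h₃/2]))) = 0 →
        Real.sqrt (∫ x in {x : EuclideanSpace ℝ (Fin 3) |
            x 0 ∈ Set.Ioo (-(h₁/2)) (h₁/2) ∧ x 1 ∈ Set.Ioo (-(h₂/2)) (h₂/2) ∧
              x 2 ∈ Set.Ioo (-(h₃/2)) (h₃/2)}, (w x) ^ 2) ≤
          C * Real.sqrt (∫ x in {x : EuclideanSpace ℝ (Fin 3) |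
            x 0 ∈ Set.Ioo (-(h₁/2)) (h₁/2) ∧ x 1 ∈ Set.Ioo (-(h₂/2)) (h₂/2) ∧
              x 2 ∈ Set.Ioo (-(h₃/2)) (h₃/2)}, ‖gradient w x‖ ^ 2)}
      (π⁻¹ * max h₁ (max h₂ h₃)) := by
  have hp := pi_pos
  constructor
  · intro w hw hb
    have hwc : Continuous w := hw.continuous
    have hfc : Continuous (fderiv ℝ w) := hw.continuous_fderiv (by norm_num)
    have hD : ∀ i : Fin 3, Continuous fun x => fderiv ℝ w x (EuclideanSpace.single i 1) :=
      fun i => hfc.clm_apply continuous_const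
    have hD0 := hD 0
    have hD1 := hD 1
    have hD2 := hD 2
    rw [int_face hh₂ hh₃ (by fun_prop), int_face hh₁ hh₃ (by fun_prop),
      int_face hh₁ hh₂ (by fun_prop)] at hb
    simp only [grad_sq]
    rw [int_box hh₁ hh₂ hh₃ (by fun_prop), int_box hh₁ hh₂ hh₃ (by fun_prop)]
    have key := main_avg (H := max h₁ (max h₂ h₃)) hh₁ hh₂ hh₃ (by simp) (by simp) (by simp)
      (f := fun p => w !₂[p.1, p.2.1, p.2.2])
      (g₁ := fun p => fderiv ℝ w !₂[p.1, p.2.1, p.2.2] (EuclideanSpace.single 0 1))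
      (g₂ := fun p => fderiv ℝ w !₂[p.1, p.2.1, p.2.2] (EuclideanSpace.single 1 1))
      (g₃ := fun p => fderiv ℝ w !₂[p.1, p.2.1, p.2.2] (EuclideanSpace.single 2 1))
      (by fun_prop) (hD0.comp (by fun_prop)) (hD1.comp (by fun_prop)) (hD2.comp (by fun_prop))
      (fun x y z => deriv_line hw 0 (fun t => !₂[t, y, z]) x
        (by intro s; ext i; fin_cases i <;> simp))
      (fun x y z => deriv_line hw 1 (fun t => !₂[x, t, z]) y
        (by intro s; ext i; fin_cases i <;> simp))
      (fun x y z => deriv_line hw 2 (fun t => !₂[x, y, t]) z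
        (by intro s; ext i; fin_cases i <;> simp)) hb
    have hH : 0 < max h₁ (max h₂ h₃) := lt_max_of_lt_left hh₁
    rw [show π⁻¹ * max h₁ (max h₂ h₃) = max h₁ (max h₂ h₃) / π by field_simp,
      ← Real.sqrt_sq (show 0 ≤ max h₁ (max h₂ h₃) / π by positivity),
      ← Real.sqrt_mul (sq_nonneg _)]
    apply Real.sqrt_le_sqrt
    have := mul_le_mul_of_nonneg_left key (show 0 ≤ h₁ * h₂ * h₃ by positivity)
    linarith
  · intro C hC
    have hV : 0 < h₁ * h₂ * h₃ := by positivity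
    have t1 := hC (fun x => sin (π / h₁ * x 0)) (by fun_prop) (by
      rw [int_face hh₂ hh₃ (by fun_prop), int_face hh₁ hh₃ (by fun_prop),
        int_face hh₁ hh₂ (by fun_prop)]
      simp [-mul_neg, sin_ends, ← two_mul, avg_mul, avg_const, sin_avg, hh₁, hh₂, hh₃])
    have t2 := hC (fun x => sin (π / h₂ * x 1)) (by fun_prop) (by
      rw [int_face hh₂ hh₃ (by fun_prop), int_face hh₁ hh₃ (by fun_prop),
        int_face hh₁ hh₂ (by fun_prop)]
      simp [-mul_neg, sin_ends, ← two_mul, avg_mul, avg_const, sin_avg, hh₁, hh₂, hh₃])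
    have t3 := hC (fun x => sin (π / h₃ * x 2)) (by fun_prop) (by
      rw [int_face hh₂ hh₃ (by fun_prop), int_face hh₁ hh₃ (by fun_prop),
        int_face hh₁ hh₂ (by fun_prop)]
      simp [-mul_neg, sin_ends, ← two_mul, avg_mul, avg_const, sin_avg, hh₁, hh₂, hh₃])
    simp only [test_grad] at t1 t2 t3
    rw [int_box hh₁ hh₂ hh₃ (by fun_prop), int_box hh₁ hh₂ hh₃ (by fun_prop)] at t1 t2 t3
    have e0 : ∀ a b c : ℝ, ![a, b, c] 0 = a := fun _ _ _ => rfl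
    have e1 : ∀ a b c : ℝ, ![a, b, c] 1 = b := fun _ _ _ => rfl
    have e2 : ∀ a b c : ℝ, ![a, b, c] 2 = c := fun _ _ _ => rfl
    simp only [avg3, e0, e1, e2, avg_mul, avg_const hh₁, avg_const hh₂, avg_const hh₃,
      sin_sq_avg hh₁, sin_sq_avg hh₂, sin_sq_avg hh₃,
      cos_sq_avg hh₁, cos_sq_avg hh₂, cos_sq_avg hh₃] at t1 t2 t3
    have f1 := final_ineq hV hh₁ t1
    have f2 := final_ineq hV hh₂ t2
    have f3 := final_ineq hV hh₃ t3
    rcases max_choice h₁ (max h₂ h₃) with h | h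
    · rw [h]; exact f1
    · rw [h]
      rcases max_choice h₂ h₃ with h' | h'
      · rw [h']; exact f2
      · rw [h']; exact f3
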